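/- Let n ≥ 1 and let G ∈ 𝒢_{n,1} be reduced. For every nontrivial strong component G_p (a directed cycle of length ℓ_p) and every integer j ≥ 1: V_p⁺(j) = { α_i ∈ V_p⁺ : dep(α_i) ≤ j and ℓ_p divides j − dep(α_i) }; moreover, for every α_i ∈ V_p⁺(j) there is exactly one walk of length j in G from β to α_i. -/

import Mathlib

open MeasureTheory

/-- Node type for digraphs in `𝒢_{n,1}`: `none` is the control node `β`,
`some i` is the state node `α_i`. -/
abbrev Node (n : ℕ) := Option (Fin n)

/-- `w` is a walk of length `k` from `u` to `v` in the digraph with edge set `E`. -/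
def IsWalk {V : Type*} (E : Set (V × V)) (k : ℕ) (w : ℕ → V) (u v : V) : Prop :=
  w 0 = u ∧ w k = v ∧ ∀ t < k, (w t, w (t + 1)) ∈ E

/-- A path is a walk with no repeated node. -/
def IsPath {V : Type*} (E : Set (V × V)) (k : ℕ) (w : ℕ → V) (u v : V) : Prop :=
  IsWalk E k w u v ∧ ∀ s ≤ k, ∀ t ≤ k, w s = w t → s = t

/-- A cycle of length `k ≥ 1` from `u` to itself, all nodes pairwise distinct except
the coinciding endpoints. -/
def IsCycle {V : Type*} (E : Set (V × V)) (k : ℕ) (w : ℕ → V) (u : V) : Prop :=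
  1 ≤ k ∧ IsWalk E k w u u ∧ ∀ s < k, ∀ t < k, w s = w t → s = t

def Reachable {V : Type*} (E : Set (V × V)) (u v : V) : Prop :=
  ∃ k w, IsWalk E k w u v

/-- `u` lies on a cycle of the digraph. -/
def OnCycle {V : Type*} (E : Set (V × V)) (u : V) : Prop :=
  ∃ k w, IsCycle E k w u

def WeaklyConnected {V : Type*} (E : Set (V × V)) : Prop :=
  ∀ u v : V, ∃ (k : ℕ) (w : ℕ → V), w 0 = u ∧ w k = v ∧
    ∀ t < k, (w t, w (t + 1)) ∈ E ∨ (w (t + 1), w t) ∈ E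

/-- Membership in the class `𝒢_{n,1}`: no edge ends at `β` and the digraph is
weakly connected. -/
def MemG (n : ℕ) (E : Set (Node n × Node n)) : Prop :=
  (∀ e ∈ E, e.2 ≠ (none : Node n)) ∧ WeaklyConnected E

/-- `V⁺_cyc`: nodes reachable by a walk from some node lying on a cycle. -/
def CycSucc {V : Type*} (E : Set (V × V)) : Set V :=
  {v | ∃ u, OnCycle E u ∧ Reachable E u v}

/-- The node set of the core relative to a node set `N`: `N \ V⁺_cyc`. -/
def CoreOn {W : Type*} (N : Set W) (F : Set (W × W)) : Set W := N \ CycSucc F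

/-- The node set `V*` of the core `G*` of `G`. -/
def CoreNodes (n : ℕ) (E : Set (Node n × Node n)) : Set (Node n) :=
  CoreOn Set.univ E

/-- The core of `G` contains a directed spanning path: a path of `G` whose node set
is exactly `V*`. -/
def HasCoreSpanningPath (n : ℕ) (E : Set (Node n × Node n)) : Prop :=
  ∃ (k : ℕ) (w : ℕ → Node n) (u v : Node n), IsPath E k w u v ∧
    {x | ∃ t ≤ k, w t = x} = CoreNodes n E

/-- A compliant pair `(A, b) ∈ 𝕍(G)`: bounded continuous, with the sparsity
pattern dictated by the edge set `E`. -/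
def Compliant {n : ℕ} {S : Type*} [TopologicalSpace S] (E : Set (Node n × Node n))
    (A : S → Fin n → Fin n → ℝ) (b : S → Fin n → ℝ) : Prop :=
  Continuous A ∧ Continuous b ∧
  (∃ C, ∀ σ i j, |A σ i j| ≤ C) ∧ (∃ C, ∀ σ i, |b σ i| ≤ C) ∧
  (∀ σ (i j : Fin n), ((some j : Node n), (some i : Node n)) ∉ E → A σ i j = 0) ∧
  (∀ σ (i : Fin n), ((none : Node n), (some i : Node n)) ∉ E → b σ i = 0)

/-- The averaged-controllability rank criterion: the span of the Bochner integrals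
`∫ A(σ)^k b(σ) dμ`, `k ∈ ℕ`, is all of `ℝⁿ`. -/
def RankCriterion {n : ℕ} {S : Type*} [MeasurableSpace S]
    (μ : Measure S) (A : S → Fin n → Fin n → ℝ) (b : S → Fin n → ℝ) : Prop :=
  Submodule.span ℝ {x : Fin n → ℝ |
    ∃ k : ℕ, x = ∫ σ, (Matrix.of (A σ) ^ k).mulVec (b σ) ∂μ} = ⊤

/-- `S` is a topological manifold of dimension `d`. -/
def IsTopManifold (d : ℕ) (S : Type*) [TopologicalSpace S] : Prop :=
  ∀ x : S, ∃ U : Set S, IsOpen U ∧ x ∈ U ∧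
    ∃ W : Set (EuclideanSpace ℝ (Fin d)), IsOpen W ∧ Nonempty (↥U ≃ₜ ↥W)

/-- The support of `μ` contains a nonempty open set. -/
def SupportHasOpen {S : Type*} [TopologicalSpace S] [MeasurableSpace S]
    (μ : Measure S) : Prop :=
  ∃ U : Set S, IsOpen U ∧ U.Nonempty ∧ ∀ W ⊆ U, IsOpen W → W.Nonempty → 0 < μ W

/-- There is exactly one path from `u` to `v`. -/
def UniquePathFrom {V : Type*} (E : Set (V × V)) (u v : V) : Prop :=
  (∃ k w, IsPath E k w u v) ∧
  ∀ (k : ℕ) (w : ℕ → V) (k' : ℕ) (w' : ℕ → V),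
    IsPath E k w u v → IsPath E k' w' u v → k = k' ∧ ∀ t ≤ k, w t = w' t

/-- A directed tree on the node set `N`: there is a unique root, from which every node
is reachable by a unique path. -/
def IsDirectedTree {W : Type*} (N : Set W) (F : Set (W × W)) : Prop :=
  ∃ r ∈ N, (∀ v ∈ N, UniquePathFrom F r v) ∧
    (∀ r' ∈ N, (∀ v ∈ N, Reachable F r' v) → r' = r)

/-- The strong component of `u`: nodes mutually reachable with `u`. -/
def StrongComp {V : Type*} (E : Set (V × V)) (u : V) : Set V :=
  {v | Reachable E u v ∧ Reachable E v u}

/-- The nodes of the skeleton graph (condensation): the strong components. -/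
def SkelNodes {V : Type*} (E : Set (V × V)) : Set (Set V) :=
  {C | ∃ u, C = StrongComp E u}

/-- The edges of the skeleton graph: `(C, C')` is an edge whenever some edge of `E`
goes from a node of `C` to a node of `C'`. -/
def SkelEdges {V : Type*} (E : Set (V × V)) : Set (Set V × Set V) :=
  {p | p.1 ∈ SkelNodes E ∧ p.2 ∈ SkelNodes E ∧ ∃ u ∈ p.1, ∃ v ∈ p.2, (u, v) ∈ E}

/-- The induced subgraph on `N` (w.r.t. the ambient edge set `F`) is a directed path:
its nodes can be ordered `w 0, …, w r` so that its edges are exactly the consecutive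
pairs. -/
def IsPathGraphOn {W : Type*} (N : Set W) (F : Set (W × W)) : Prop :=
  ∃ (r : ℕ) (w : ℕ → W), (∀ s ≤ r, ∀ t ≤ r, w s = w t → s = t) ∧
    {x | ∃ t ≤ r, w t = x} = N ∧
    (∀ p : W × W, (p ∈ F ∧ p.1 ∈ N ∧ p.2 ∈ N) ↔ ∃ t < r, p = (w t, w (t + 1)))

/-- The induced subgraph on `C` is a single directed cycle: its nodes can be cyclically
ordered so that its edges are exactly the consecutive pairs. -/
def IsSingleCycleOn {V : Type*} (C : Set V) (E : Set (V × V)) : Prop :=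
  ∃ (l : ℕ) (w : ℕ → V), 1 ≤ l ∧ (∀ s < l, ∀ t < l, w s = w t → s = t) ∧
    {x | ∃ t < l, w t = x} = C ∧
    (∀ p : V × V, (p ∈ E ∧ p.1 ∈ C ∧ p.2 ∈ C) ↔ ∃ t < l, p = (w t, w ((t + 1) % l)))

/-- `G ∈ 𝒢_{n,1}` is reduced (Definition 5 of the paper): (1) the skeleton graph `S`
with self-loops removed is a directed tree and the core `S*` of `S` is a directed path;
(2) every edge of `S` between distinct components comes from a unique edge of `G`;
(3) every node of `S` with a self-loop is an out-neighbor of `S*`, and every nontrivial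
strong component of `G` is a single directed cycle. -/
def ReducedGraph (n : ℕ) (E : Set (Node n × Node n)) : Prop :=
  MemG n E ∧
  IsDirectedTree (SkelNodes E) {p ∈ SkelEdges E | p.1 ≠ p.2} ∧
  IsPathGraphOn (CoreOn (SkelNodes E) (SkelEdges E)) (SkelEdges E) ∧
  (∀ p ∈ SkelEdges E, p.1 ≠ p.2 →
    ∃! e : Node n × Node n, e ∈ E ∧ e.1 ∈ p.1 ∧ e.2 ∈ p.2) ∧
  (∀ C : Set (Node n), (C, C) ∈ SkelEdges E →
    (∃ C' ∈ CoreOn (SkelNodes E) (SkelEdges E), (C', C) ∈ SkelEdges E) ∧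
    IsSingleCycleOn C E)

/-- `V(j)`: nodes reachable from `β` by a walk of length `j`. -/
def VSet {n : ℕ} (E : Set (Node n × Node n)) (j : ℕ) : Set (Node n) :=
  {v | ∃ w : ℕ → Node n, IsWalk E j w (none : Node n) v}

/-- `V_p⁺`: nodes reachable by a walk from some node of the component `C`. -/
def VpPlus {n : ℕ} (E : Set (Node n × Node n)) (C : Set (Node n)) : Set (Node n) :=
  {v | ∃ u ∈ C, Reachable E u v}

/-!
A nontrivial component `C` sits directly below the acyclic core and every component has at most
one entering edge, so the set `U` of descendants of `C` contains no other cycle and is entered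
only through one edge `(x₀, y₀)` with `y₀ ∈ C`. Upstream of `x₀`, as well as inside `U`, every node
has at most one predecessor. Hence a walk from `β` to `v ∈ U` is determined by its length, when
read backwards from its end; and it first follows the only walk to `x₀`, crosses `(x₀, y₀)`, turns
around `C` some number of times, and then follows the path to `v`. Its length is therefore the
depth of `v` plus a multiple of the length of `C`.
-/

section Walks

variable {V : Type*} {E F : Set (V × V)} {k m i : ℕ} {w w' : ℕ → V} {u v x : V}

theorem IsWalk.take (h : IsWalk E k w u v) (hi : i ≤ k) : IsWalk E i w u (w i) :=
  ⟨h.1, rfl, fun t ht => h.2.2 t (ht.trans_le hi)⟩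

theorem IsWalk.drop (h : IsWalk E k w u v) (hi : i ≤ k) :
    IsWalk E (k - i) (fun t => w (i + t)) (w i) v :=
  ⟨rfl, by simpa only [Nat.add_sub_cancel' hi] using h.2.1, fun t ht => h.2.2 (i + t) (by omega)⟩

theorem IsWalk.snoc (h : IsWalk E k w u v) (hvx : (v, x) ∈ E) :
    IsWalk E (k + 1) (fun t => if t ≤ k then w t else x) u x := by
  obtain ⟨hstart, hend, hstep⟩ := h
  refine ⟨by simpa using hstart, by simp, fun t ht => ?_⟩
  rcases Nat.lt_succ_iff_lt_or_eq.mp ht with hlt | rfl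
  · simpa [hlt.le, Nat.succ_le_of_lt hlt] using hstep t hlt
  · simpa [hend] using hvx

theorem IsWalk.exists_append (h : IsWalk E k w u v) (h' : IsWalk E m w' v x) :
    ∃ w'', IsWalk E (k + m) w'' u x := by
  induction m generalizing x with
  | zero =>
    obtain rfl : v = x := h'.1.symm.trans h'.2.1
    exact ⟨w, h⟩
  | succ m ih =>
    obtain ⟨w'', hw''⟩ := ih (h'.take m.le_succ)
    exact ⟨_, hw''.snoc (h'.2.1 ▸ h'.2.2 m m.lt_succ_self)⟩

theorem IsPath.snoc (h : IsPath E k w u v) (hvx : (v, x) ∈ E) (hx : ∀ t ≤ k, w t ≠ x) :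
    IsPath E (k + 1) (fun t => if t ≤ k then w t else x) u x := by
  refine ⟨h.1.snoc hvx, fun s hs t ht hst => ?_⟩
  by_cases hsk : s ≤ k <;> by_cases htk : t ≤ k <;> simp only [hsk, htk, if_true, if_false] at hst
  · exact h.2 s hsk t htk hst
  · exact absurd hst (hx s hsk)
  · exact absurd hst.symm (hx t htk)
  · omega

theorem IsWalk.exists_step_into (h : IsWalk E k w u v) {S : Set V} (hu : u ∉ S) (hv : v ∈ S) :
    ∃ t < k, w t ∉ S ∧ w (t + 1) ∈ S := by
  by_contra! hstay
  have hout : ∀ t ≤ k, w t ∉ S := by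
    intro t
    induction t with
    | zero => exact fun _ => h.1 ▸ hu
    | succ t ih => exact fun ht => hstay t ht (ih (Nat.le_of_succ_le ht))
  exact hout k le_rfl (h.2.1 ▸ hv)

theorem IsWalk.mem_of_closed (h : IsWalk E k w u v) {S : Set V}
    (hS : ∀ ⦃x y⦄, x ∈ S → (x, y) ∈ E → y ∈ S) (hi : w i ∈ S) {t : ℕ} (hit : i ≤ t)
    (htk : t ≤ k) : w t ∈ S := by
  induction t, hit using Nat.le_induction with
  | base => exact hi
  | succ t _ ih => exact hS (ih (Nat.le_of_succ_le htk)) (h.2.2 t htk)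

theorem IsWalk.index_eq_zero_of_source (h : IsWalk E k w u v) (hx : ∀ y, (y, x) ∉ E)
    (hi : i ≤ k) (hwi : w i = x) : i = 0 := by
  cases i with
  | zero => rfl
  | succ i => exact absurd (hwi ▸ h.2.2 i hi) (hx _)

theorem reachable_iff_reflTransGen :
    Reachable E u v ↔ Relation.ReflTransGen (fun x y => (x, y) ∈ E) u v := by
  constructor
  · rintro ⟨k, w, rfl, rfl, hstep⟩
    exact (reflTransGen_of_succ_of_le (fun s t => (w s, w t) ∈ E) (fun t ht => hstep t ht.2)
      k.zero_le).lift w fun _ _ => id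
  · intro h
    induction h with
    | refl => exact ⟨0, fun _ => u, rfl, rfl, fun t ht => absurd ht t.not_lt_zero⟩
    | tail _ hvx ih =>
      obtain ⟨k, w, hw⟩ := ih
      exact ⟨k + 1, _, hw.snoc hvx⟩

theorem Reachable.refl (u : V) : Reachable E u u :=
  reachable_iff_reflTransGen.2 .refl

theorem Reachable.of_edge (h : (u, v) ∈ E) : Reachable E u v :=
  reachable_iff_reflTransGen.2 (.single h)

theorem Reachable.trans (h : Reachable E u v) (h' : Reachable E v x) : Reachable E u x :=
  reachable_iff_reflTransGen.2
    ((reachable_iff_reflTransGen.1 h).trans (reachable_iff_reflTransGen.1 h'))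

theorem Reachable.mono (hEF : E ⊆ F) (h : Reachable E u v) : Reachable F u v :=
  reachable_iff_reflTransGen.2 <|
    (reachable_iff_reflTransGen.1 h).lift id fun _ _ he => hEF he

theorem Reachable.eq_or_exists_edge (h : Reachable E u v) :
    u = v ∨ ∃ x, Reachable E u x ∧ (x, v) ∈ E := by
  rcases (reachable_iff_reflTransGen.1 h).cases_tail with rfl | ⟨x, hux, hxv⟩
  · exact .inl rfl
  · exact .inr ⟨x, reachable_iff_reflTransGen.2 hux, hxv⟩

theorem Reachable.eq_of_source (h : Reachable E u v) (hv : ∀ x, (x, v) ∉ E) : u = v :=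
  h.eq_or_exists_edge.resolve_right fun ⟨x, _, hxv⟩ => hv x hxv

theorem IsWalk.reachable_start (h : IsWalk E k w u v) (hi : i ≤ k) : Reachable E u (w i) :=
  ⟨i, w, h.take hi⟩

theorem IsWalk.reachable_end (h : IsWalk E k w u v) (hi : i ≤ k) : Reachable E (w i) v :=
  ⟨k - i, _, h.drop hi⟩

theorem Reachable.exists_edge_into (h : Reachable E u v) {S : Set V} (hu : u ∉ S) (hv : v ∈ S) :
    ∃ x y, Reachable E u x ∧ (x, y) ∈ E ∧ x ∉ S ∧ y ∈ S := by
  obtain ⟨k, w, hw⟩ := h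
  obtain ⟨t, ht, hout, hin⟩ := hw.exists_step_into hu hv
  exact ⟨w t, w (t + 1), hw.reachable_start ht.le, hw.2.2 t ht, hout, hin⟩

end Walks

section BackwardDeterminism

variable {V : Type*} {E : Set (V × V)} {U : Set V} {k k' d : ℕ} {w w' p : ℕ → V} {u u' v x₀ y₀ : V}

/-- The subgraph induced on `U` has in-degree at most one, so that walks inside `U` can be
retraced from their last node. -/
def BackwardDeterministicOn (E : Set (V × V)) (U : Set V) : Prop :=
  ∀ y ∈ U, {x ∈ U | (x, y) ∈ E}.Subsingleton

theorem BackwardDeterministicOn.eq_counting_from_end (hU : BackwardDeterministicOn E U)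
    (hw : IsWalk E k w u v) (hw' : IsWalk E k' w' u' v) (hwU : ∀ t ≤ k, w t ∈ U)
    (hwU' : ∀ t ≤ k', w' t ∈ U) {s : ℕ} (hs : s ≤ k) (hs' : s ≤ k') :
    w (k - s) = w' (k' - s) := by
  induction s with
  | zero => exact hw.2.1.trans hw'.2.1.symm
  | succ s ih =>
    have hedge := hw.2.2 (k - (s + 1)) (by omega)
    have hedge' := hw'.2.2 (k' - (s + 1)) (by omega)
    rw [show k - (s + 1) + 1 = k - s by omega] at hedge
    rw [show k' - (s + 1) + 1 = k' - s by omega, ← ih (by omega) (by omega)] at hedge'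
    exact hU _ (hwU _ (by omega)) ⟨hwU _ (by omega), hedge⟩ ⟨hwU' _ (by omega), hedge'⟩

theorem BackwardDeterministicOn.eqOn_walk (hU : BackwardDeterministicOn E U)
    (hw : IsWalk E k w u v) (hw' : IsWalk E k w' u' v) (hwU : ∀ t ≤ k, w t ∈ U)
    (hwU' : ∀ t ≤ k, w' t ∈ U) {t : ℕ} (ht : t ≤ k) : w t = w' t := by
  simpa only [Nat.sub_sub_self ht] using
    hU.eq_counting_from_end hw hw' hwU hwU' (k.sub_le t) (k.sub_le t)

theorem BackwardDeterministicOn.path_is_final_segment (hU : BackwardDeterministicOn E U)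
    (hp : IsPath E d p u v) (hw : IsWalk E k w u v) (hpU : ∀ t ≤ d, p t ∈ U)
    (hwU : ∀ t ≤ k, w t ∈ U) : d ≤ k ∧ w (k - d) = u := by
  have hdk : d ≤ k := by
    by_contra! hkd
    have hreturn := hU.eq_counting_from_end hp.1 hw hpU hwU hkd.le le_rfl
    rw [Nat.sub_self, hw.1, ← hp.1.1] at hreturn
    have := hp.2 _ (d.sub_le k) 0 d.zero_le hreturn
    omega
  have hstart := hU.eq_counting_from_end hp.1 hw hpU hwU le_rfl hdk
  rw [Nat.sub_self, hp.1.1] at hstart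
  exact ⟨hdk, hstart.symm⟩

theorem BackwardDeterministicOn.length_le_of_source
    (hU : BackwardDeterministicOn E {x | Reachable E x v}) (hu : ∀ x, (x, u) ∉ E)
    (hw : IsWalk E k w u v) (hw' : IsWalk E k' w' u v) : k' ≤ k := by
  by_contra! hlt
  have hreturn := hU.eq_counting_from_end hw hw' (fun _ => hw.reachable_end)
    (fun _ => hw'.reachable_end) le_rfl hlt.le
  rw [Nat.sub_self, hw.1] at hreturn
  have := hw'.index_eq_zero_of_source hu (k'.sub_le k) hreturn.symm
  omega

theorem BackwardDeterministicOn.walk_unique_of_source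
    (hU : BackwardDeterministicOn E {x | Reachable E x v}) (hu : ∀ x, (x, u) ∉ E)
    (hw : IsWalk E k w u v) (hw' : IsWalk E k' w' u v) : k = k' ∧ ∀ t ≤ k, w t = w' t := by
  obtain rfl : k = k' :=
    le_antisymm (hU.length_le_of_source hu hw' hw) (hU.length_le_of_source hu hw hw')
  exact ⟨rfl, fun t => hU.eqOn_walk hw hw' (fun _ => hw.reachable_end) fun _ => hw'.reachable_end⟩

/-- `U` is a region that walks never leave and enter only along the edge `(x₀, y₀)`, and walks are
backward deterministic both upstream of `x₀` and inside `U`. It isolates what walks into the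
descendants of one cycle of a reduced graph look like. -/
structure IsFunnel (E : Set (V × V)) (U : Set V) (x₀ y₀ : V) : Prop where
  closed : ∀ ⦃x y⦄, x ∈ U → (x, y) ∈ E → y ∈ U
  entry : ∀ ⦃x y⦄, (x, y) ∈ E → x ∉ U → y ∈ U → x = x₀ ∧ y = y₀
  upstream : BackwardDeterministicOn E {x | Reachable E x x₀}
  inside : BackwardDeterministicOn E U

namespace IsFunnel

theorem exists_entry_time (h : IsFunnel E U x₀ y₀) (hu : u ∉ U) (hv : v ∈ U)
    (hw : IsWalk E k w u v) :
    ∃ a < k, w a = x₀ ∧ w (a + 1) = y₀ ∧ ∀ t, a + 1 ≤ t → t ≤ k → w t ∈ U := by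
  obtain ⟨a, hak, hout, hin⟩ := hw.exists_step_into hu hv
  obtain ⟨hx₀, hy₀⟩ := h.entry (hw.2.2 a hak) hout hin
  exact ⟨a, hak, hx₀, hy₀, fun t => hw.mem_of_closed h.closed hin⟩

theorem exists_common_entry_time (h : IsFunnel E U x₀ y₀) (hsource : ∀ x, (x, u) ∉ E)
    (hu : u ∉ U) (hv : v ∈ U) (hw : IsWalk E k w u v) (hw' : IsWalk E k' w' u v) :
    ∃ a, (a < k ∧ w (a + 1) = y₀ ∧ ∀ t, a + 1 ≤ t → t ≤ k → w t ∈ U) ∧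
      (a < k' ∧ w' (a + 1) = y₀ ∧ ∀ t, a + 1 ≤ t → t ≤ k' → w' t ∈ U) ∧
      ∀ t ≤ a, w t = w' t := by
  obtain ⟨a, hak, hx₀, hy₀, hU⟩ := h.exists_entry_time hu hv hw
  obtain ⟨a', hak', hx₀', hy₀', hU'⟩ := h.exists_entry_time hu hv hw'
  obtain ⟨rfl, hstem⟩ := h.upstream.walk_unique_of_source hsource
    (hx₀ ▸ hw.take hak.le) (hx₀' ▸ hw'.take hak'.le)
  exact ⟨a, ⟨hak, hy₀, hU⟩, ⟨hak', hy₀', hU'⟩, hstem⟩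

theorem walk_unique (h : IsFunnel E U x₀ y₀) (hsource : ∀ x, (x, u) ∉ E) (hu : u ∉ U)
    (hv : v ∈ U) (hw : IsWalk E k w u v) (hw' : IsWalk E k w' u v) : ∀ t ≤ k, w t = w' t := by
  intro t ht
  obtain ⟨a, ⟨hak, -, hU⟩, ⟨-, -, hU'⟩, hstem⟩ :=
    h.exists_common_entry_time hsource hu hv hw hw'
  rcases le_or_gt t a with hta | hat
  · exact hstem t hta
  · have htail := h.inside.eqOn_walk (hw.drop hak) (hw'.drop hak)
      (fun s hs => hU _ (by omega) (by omega)) (fun s hs => hU' _ (by omega) (by omega))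
      (t := t - (a + 1)) (by omega)
    simpa only [Nat.add_sub_cancel' (Nat.succ_le_of_lt hat)] using htail

theorem exists_closed_walk (h : IsFunnel E U x₀ y₀) (hsource : ∀ x, (x, u) ∉ E) (hu : u ∉ U)
    (hv : v ∈ U) (hp : IsPath E d p u v) (hw : IsWalk E k w u v) :
    d ≤ k ∧ ∃ r, IsWalk E (k - d) r y₀ y₀ := by
  obtain ⟨a, ⟨had, hpy₀, hpU⟩, ⟨hak, hwy₀, hwU⟩, -⟩ :=
    h.exists_common_entry_time hsource hu hv hp.1 hw
  have hwtail := hwy₀ ▸ hw.drop hak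
  have hptail : IsPath E (d - (a + 1)) (fun t => p (a + 1 + t)) y₀ v :=
    ⟨hpy₀ ▸ hp.1.drop had, fun s hs t ht hst => by
      have := hp.2 _ (by omega) _ (by omega) hst
      omega⟩
  obtain ⟨hle, hreturn⟩ := h.inside.path_is_final_segment hptail hwtail
    (fun t _ => hpU _ (by omega) (by omega)) (fun t _ => hwU _ (by omega) (by omega))
  have hclosed := hreturn ▸ hwtail.take (i := k - (a + 1) - (d - (a + 1))) (Nat.sub_le _ _)
  rw [show k - (a + 1) - (d - (a + 1)) = k - d by omega] at hclosed
  exact ⟨by omega, _, hclosed⟩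

theorem exists_walk_iff (h : IsFunnel E U x₀ y₀) (hsource : ∀ x, (x, u) ∉ E) (hu : u ∉ U)
    (hv : v ∈ U) (hp : IsPath E d p u v) :
    (∃ w, IsWalk E k w u v) ↔ d ≤ k ∧ ∃ r, IsWalk E (k - d) r y₀ y₀ := by
  refine ⟨fun ⟨w, hw⟩ => h.exists_closed_walk hsource hu hv hp hw, fun ⟨_, r, hr⟩ => ?_⟩
  obtain ⟨a, had, -, hy₀, -⟩ := h.exists_entry_time hu hv hp.1
  obtain ⟨w₁, hw₁⟩ := (hy₀ ▸ hp.1.take had).exists_append hr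
  obtain ⟨w₂, hw₂⟩ := hw₁.exists_append (hy₀ ▸ hp.1.drop had)
  rw [show a + 1 + (k - d) + (d - (a + 1)) = k by omega] at hw₂
  exact ⟨w₂, hw₂⟩

end IsFunnel

end BackwardDeterminism

section Skeleton

variable {V : Type*} {E : Set (V × V)} {C D : Set V} {u v x y : V}

theorem mem_strongComp_self (u : V) : u ∈ StrongComp E u := ⟨.refl u, .refl u⟩

theorem eq_strongComp_of_mem (hD : D ∈ SkelNodes E) (hx : x ∈ D) : D = StrongComp E x := by
  obtain ⟨u, rfl⟩ := hD
  ext v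
  exact ⟨fun hv => ⟨hx.2.trans hv.1, hv.2.trans hx.1⟩,
    fun hv => ⟨hx.1.trans hv.1, hv.2.trans hx.2⟩⟩

theorem reachable_of_mem_skelNodes (hD : D ∈ SkelNodes E) (hx : x ∈ D) (hy : y ∈ D) :
    Reachable E x y :=
  (eq_strongComp_of_mem hD hx ▸ hy : y ∈ StrongComp E x).1

theorem mem_of_reachable_of_reachable (hD : D ∈ SkelNodes E) (hu : u ∈ D) (hv : v ∈ D)
    (hux : Reachable E u x) (hxv : Reachable E x v) : x ∈ D := by
  rw [eq_strongComp_of_mem hD hu]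
  exact ⟨hux, hxv.trans (reachable_of_mem_skelNodes hD hv hu)⟩

theorem strongComp_mem_skelNodes (u : V) : StrongComp E u ∈ SkelNodes E := ⟨u, rfl⟩

theorem strongComp_edge_mem_skelEdges (h : (u, v) ∈ E) :
    (StrongComp E u, StrongComp E v) ∈ SkelEdges E :=
  ⟨⟨u, rfl⟩, ⟨v, rfl⟩, u, mem_strongComp_self u, v, mem_strongComp_self v, h⟩

theorem Reachable.skeleton (h : Reachable E u v) :
    Reachable (SkelEdges E) (StrongComp E u) (StrongComp E v) := by
  rw [reachable_iff_reflTransGen] at h ⊢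
  exact h.lift _ fun _ _ => strongComp_edge_mem_skelEdges

theorem Reachable.of_skeleton (h : Reachable (SkelEdges E) C D) (hC : C ∈ SkelNodes E)
    (hx : x ∈ C) (hy : y ∈ D) : Reachable E x y := by
  rw [reachable_iff_reflTransGen] at h
  induction h generalizing y with
  | refl => exact reachable_of_mem_skelNodes hC hx hy
  | tail _ hedge ih =>
    obtain ⟨-, hD, a, ha, b, hb, hab⟩ := hedge
    exact ((ih ha).trans (.of_edge hab)).trans (reachable_of_mem_skelNodes hD hb hy)

theorem not_reachable_of_skelEdges_of_ne (h : (C, D) ∈ SkelEdges E) (hne : C ≠ D) :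
    ¬ Reachable (SkelEdges E) D C := by
  intro hDC
  obtain ⟨hC, hD, x, hx, y, hy, hxy⟩ := h
  have hxD : x ∈ D :=
    mem_of_reachable_of_reachable hD hy hy (hDC.of_skeleton hD hy hx) (.of_edge hxy)
  exact hne ((eq_strongComp_of_mem hC hx).trans (eq_strongComp_of_mem hD hxD).symm)

theorem IsDirectedTree.parent_unique {W : Type*} {N : Set W} {F : Set (W × W)}
    (h : IsDirectedTree N F) {a a' b : W} (ha : a ∈ N) (ha' : a' ∈ N) (hb : b ∈ N)
    (hab : (a, b) ∈ F) (ha'b : (a', b) ∈ F) (hba : ¬ Reachable F b a)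
    (hba' : ¬ Reachable F b a') : a = a' := by
  obtain ⟨r, -, hpath, -⟩ := h
  obtain ⟨⟨k, w, hw⟩, -⟩ := hpath a ha
  obtain ⟨⟨k', w', hw'⟩, -⟩ := hpath a' ha'
  have hext := hw.snoc hab fun t ht hwt => hba (hwt ▸ hw.1.reachable_end ht)
  have hext' := hw'.snoc ha'b fun t ht hwt => hba' (hwt ▸ hw'.1.reachable_end ht)
  obtain ⟨hlen, heq⟩ := (hpath b hb).2 _ _ _ _ hext hext'
  obtain rfl : k = k' := Nat.succ_injective hlen
  simpa [hw.1.2.1, hw'.1.2.1] using heq k k.le_succ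

/-- Every strong component is entered by at most one edge; this is how the tree condition on the
skeleton and the uniqueness of the edges between components are used. -/
def HasUniqueEntries (E : Set (V × V)) : Prop :=
  ∀ D ∈ SkelNodes E, {e ∈ E | e.1 ∉ D ∧ e.2 ∈ D}.Subsingleton

theorem IsDirectedTree.hasUniqueEntries
    (htree : IsDirectedTree (SkelNodes E) {p ∈ SkelEdges E | p.1 ≠ p.2})
    (hunique : ∀ p ∈ SkelEdges E, p.1 ≠ p.2 → ∃! e : V × V, e ∈ E ∧ e.1 ∈ p.1 ∧ e.2 ∈ p.2) :
    HasUniqueEntries E := by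
  rintro D hD ⟨x, y⟩ ⟨hxy, hx, hy⟩ ⟨x', y'⟩ ⟨hxy', hx', hy'⟩
  have hskel : ∀ {a b}, (a, b) ∈ E → a ∉ D → b ∈ D →
      (StrongComp E a, D) ∈ SkelEdges E ∧ StrongComp E a ≠ D := fun {a b} hab ha hb =>
    ⟨eq_strongComp_of_mem hD hb ▸ strongComp_edge_mem_skelEdges hab,
      fun h => ha (h ▸ mem_strongComp_self a)⟩
  obtain ⟨hedge, hne⟩ := hskel hxy hx hy
  obtain ⟨hedge', hne'⟩ := hskel hxy' hx' hy'
  have hparent : StrongComp E x = StrongComp E x' :=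
    htree.parent_unique hedge.1 hedge'.1 hD ⟨hedge, hne⟩ ⟨hedge', hne'⟩
      (fun h => not_reachable_of_skelEdges_of_ne hedge hne (h.mono fun _ => And.left))
      (fun h => not_reachable_of_skelEdges_of_ne hedge' hne' (h.mono fun _ => And.left))
  exact (hunique _ hedge hne).unique ⟨hxy, mem_strongComp_self x, hy⟩
    ⟨hxy', hparent ▸ mem_strongComp_self x', hy'⟩

theorem HasUniqueEntries.pred_unique (h : HasUniqueEntries E)
    (hy : (StrongComp E y, StrongComp E y) ∉ SkelEdges E) : {x | (x, y) ∈ E}.Subsingleton := by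
  have houtside : ∀ {x}, (x, y) ∈ E → x ∉ StrongComp E y := fun {x} hxy hx =>
    hy ⟨⟨y, rfl⟩, ⟨y, rfl⟩, x, hx, y, mem_strongComp_self y, hxy⟩
  intro x hxy x' hxy'
  exact congrArg Prod.fst <| h _ (strongComp_mem_skelNodes y)
    ⟨hxy, houtside hxy, mem_strongComp_self y⟩ ⟨hxy', houtside hxy', mem_strongComp_self y⟩

/-- Every node of the skeleton carrying a self-loop is an out-neighbor of the core: the first half
of condition (3) on reduced graphs, which prevents cycles from lying below one another. -/
def NontrivialBelowCore (E : Set (V × V)) : Prop :=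
  ∀ D, (D, D) ∈ SkelEdges E →
    ∃ D' ∈ CoreOn (SkelNodes E) (SkelEdges E), (D', D) ∈ SkelEdges E

theorem not_reachable_core (hC : (C, C) ∈ SkelEdges E) (hu : u ∈ C)
    (hD : D ∈ CoreOn (SkelNodes E) (SkelEdges E)) (hx : x ∈ D) : ¬ Reachable E u x := by
  intro hux
  have hloop : OnCycle (SkelEdges E) C :=
    ⟨1, fun _ => C, le_rfl, ⟨rfl, rfl, fun _ _ => hC⟩, fun s hs t ht _ => by omega⟩
  have hCD : Reachable (SkelEdges E) C D := by
    rw [eq_strongComp_of_mem (D := C) hC.1 hu, eq_strongComp_of_mem hD.1 hx]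
    exact hux.skeleton
  exact hD.2 ⟨C, hloop, hCD⟩

theorem HasUniqueEntries.backwardDeterministicOn_upstream_core (h : HasUniqueEntries E)
    (hD : D ∈ CoreOn (SkelNodes E) (SkelEdges E)) (hx : x ∈ D) :
    BackwardDeterministicOn E {y | Reachable E y x} := fun y hyx =>
  (h.pred_unique fun hloop => not_reachable_core hloop (mem_strongComp_self y) hD hx hyx).anti
    fun _ => And.right

end Skeleton

section SingleCycle

variable {V : Type*} {E : Set (V × V)} {C : Set V} {y : V} {l m : ℕ}

theorem ncard_eq_of_enumeration {c : ℕ → V} (hinj : ∀ s < l, ∀ t < l, c s = c t → s = t)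
    (hC : {x | ∃ t < l, c t = x} = C) : C.ncard = l := by
  have hinjOn : Set.InjOn c (Set.Iio l) := fun s hs t => hinj s hs t
  have himage : c '' Set.Iio l = C := hC
  rw [← himage, hinjOn.ncard_image, Set.ncard_Iio_nat]

theorem IsSingleCycleOn.exists_periodic_enumeration (h : IsSingleCycleOn C E) :
    ∃ c : ℕ → V, (∀ s t, c s = c t ↔ s ≡ t [MOD C.ncard]) ∧ Set.range c = C ∧
      ∀ s, ∀ y ∈ C, (c s, y) ∈ E ↔ y = c (s + 1) := by
  obtain ⟨l, w, hl, hinj, hC, hE⟩ := h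
  obtain rfl : C.ncard = l := ncard_eq_of_enumeration hinj hC
  have hmod (s : ℕ) : s % C.ncard < C.ncard := Nat.mod_lt s hl
  have hmem : ∀ t < C.ncard, w t ∈ C := fun t ht => hC.subset ⟨t, ht, rfl⟩
  refine ⟨fun s => w (s % C.ncard), fun s t => ⟨hinj _ (hmod s) _ (hmod t), congrArg w⟩,
    Set.Subset.antisymm (Set.range_subset_iff.2 fun s => hmem _ (hmod s)) fun x hx => ?_,
    fun s y hy => ⟨fun hsy => ?_, ?_⟩⟩
  · obtain ⟨t, ht, rfl⟩ := hC.superset hx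
    exact ⟨t, congrArg w (Nat.mod_eq_of_lt ht)⟩
  · obtain ⟨t, ht, heq⟩ := (hE _).1 ⟨hsy, hmem _ (hmod s), hy⟩
    obtain ⟨hst, hyt⟩ := Prod.mk.inj heq
    obtain rfl := hinj _ (hmod s) _ ht hst
    rw [hyt, Nat.mod_add_mod]
  · rintro rfl
    exact ((hE _).2 ⟨_, hmod s, by rw [Nat.mod_add_mod]⟩).1

theorem IsSingleCycleOn.backwardDeterministicOn (h : IsSingleCycleOn C E) :
    BackwardDeterministicOn E C := by
  obtain ⟨c, hmod, hrange, hsucc⟩ := h.exists_periodic_enumeration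
  rintro y hy x ⟨hx, hxy⟩ x' ⟨hx', hxy'⟩
  obtain ⟨s, rfl⟩ := hrange.superset hx
  obtain ⟨t, rfl⟩ := hrange.superset hx'
  have hst : c (s + 1) = c (t + 1) := ((hsucc s y hy).1 hxy).symm.trans ((hsucc t y hy).1 hxy')
  exact (hmod s t).2 (((hmod _ _).1 hst).add_right_cancel' 1)

theorem IsSingleCycleOn.exists_closed_walk_iff (h : IsSingleCycleOn C E) (hC : C ∈ SkelNodes E)
    (hy : y ∈ C) : (∃ w, IsWalk E m w y y) ↔ C.ncard ∣ m := by
  obtain ⟨c, hmod, hrange, hsucc⟩ := h.exists_periodic_enumeration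
  obtain ⟨s, rfl⟩ := hrange.superset hy
  have hreturn : c (s + m) = c s ↔ C.ncard ∣ m := (hmod _ _).trans Nat.add_modEq_left_iff
  rw [← hreturn]
  constructor
  · rintro ⟨w, hw⟩
    have hwC : ∀ t ≤ m, w t ∈ C := fun t ht =>
      mem_of_reachable_of_reachable hC hy hy (hw.reachable_start ht) (hw.reachable_end ht)
    have hturn : ∀ t ≤ m, w t = c (s + t) := by
      intro t
      induction t with
      | zero => exact fun _ => hw.1
      | succ t ih =>
        intro ht
        exact (hsucc _ _ (hwC _ ht)).1 (ih (Nat.le_of_succ_le ht) ▸ hw.2.2 t ht)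
    exact (hturn m le_rfl).symm.trans hw.2.1
  · exact fun hret => ⟨fun t => c (s + t), rfl, hret, fun t _ =>
      (hsucc _ _ (hrange.subset ⟨_, rfl⟩)).2 rfl⟩

end SingleCycle

section Descendants

variable {V : Type*} {E : Set (V × V)} {C D : Set V} {β x y x₀ y₀ : V}

/-- The nodes reachable from `C`: the set `V_p⁺` of the paper, in an arbitrary digraph. -/
def descendants (E : Set (V × V)) (C : Set V) : Set V :=
  {v | ∃ u ∈ C, Reachable E u v}

theorem subset_descendants : C ⊆ descendants E C := fun x hx => ⟨x, hx, .refl x⟩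

theorem mem_descendants_of_edge (hx : x ∈ descendants E C) (hxy : (x, y) ∈ E) :
    y ∈ descendants E C := by
  obtain ⟨u, hu, hux⟩ := hx
  exact ⟨u, hu, hux.trans (.of_edge hxy)⟩

theorem mem_of_mem_descendants_of_reachable (hC : C ∈ SkelNodes E) (hx : x ∈ descendants E C)
    (hy : y ∈ C) (hxy : Reachable E x y) : x ∈ C := by
  obtain ⟨u, hu, hux⟩ := hx
  exact mem_of_reachable_of_reachable hC hu hy hux hxy

theorem source_notMem_descendants (hβ : ∀ x, (x, β) ∉ E) (hC : (C, C) ∈ SkelEdges E) :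
    β ∉ descendants E C := by
  rintro ⟨u, hu, huβ⟩
  obtain ⟨hCnode, -, a, -, b, hb, hab⟩ := hC
  obtain rfl := ((reachable_of_mem_skelNodes hCnode hb hu).trans huβ).eq_of_source hβ
  exact hβ a hab

theorem core_notMem_descendants (hC : (C, C) ∈ SkelEdges E)
    (hD : D ∈ CoreOn (SkelNodes E) (SkelEdges E)) (hx : x ∈ D) : x ∉ descendants E C :=
  fun ⟨_, hu, hux⟩ => not_reachable_core hC hu hD hx hux

/- If `D ≠ C`, the walk from `C` into `D` would enter `D` through its only entering edge, which
starts in the core; but nothing in the core lies below a cycle. -/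
theorem HasUniqueEntries.mem_of_mem_nontrivial_of_mem_descendants (h : HasUniqueEntries E)
    (hcore : NontrivialBelowCore E) (hC : (C, C) ∈ SkelEdges E) (hD : (D, D) ∈ SkelEdges E)
    (hyD : y ∈ D) (hy : y ∈ descendants E C) : y ∈ C := by
  by_contra hyC
  obtain ⟨D', hD', -, -, a, ha, b, hb, hab⟩ := hcore D hD
  have haD : a ∉ D := fun haD => not_reachable_core hD haD hD' ha (.refl a)
  obtain ⟨u, hu, huy⟩ := hy
  have huD : u ∉ D := fun huD => hyC <|
    mem_of_reachable_of_reachable hC.1 hu hu huy (reachable_of_mem_skelNodes hD.1 hyD huD)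
  obtain ⟨x, z, hux, hxz, hx, hz⟩ := huy.exists_edge_into huD hyD
  obtain rfl : x = a := congrArg Prod.fst (h D hD.1 ⟨hxz, hx, hz⟩ ⟨hab, haD, hb⟩)
  exact not_reachable_core hC hu hD' ha hux

theorem HasUniqueEntries.pred_unique_of_mem_descendants (h : HasUniqueEntries E)
    (hcore : NontrivialBelowCore E) (hC : (C, C) ∈ SkelEdges E) (hy : y ∈ descendants E C)
    (hyC : y ∉ C) : {x | (x, y) ∈ E}.Subsingleton :=
  h.pred_unique fun hD =>
    hyC (h.mem_of_mem_nontrivial_of_mem_descendants hcore hC hD (mem_strongComp_self y) hy)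

theorem HasUniqueEntries.mem_of_edge_into_descendants (h : HasUniqueEntries E)
    (hcore : NontrivialBelowCore E) (hC : (C, C) ∈ SkelEdges E) (hxy : (x, y) ∈ E)
    (hx : x ∉ descendants E C) (hy : y ∈ descendants E C) : y ∈ C := by
  by_contra hyC
  have hunique := h.pred_unique_of_mem_descendants hcore hC hy hyC
  obtain ⟨u, hu, huy⟩ := hy
  rcases huy.eq_or_exists_edge with rfl | ⟨z, huz, hzy⟩
  · exact hyC hu
  · exact hx (hunique hxy hzy ▸ ⟨u, hu, huz⟩)

theorem HasUniqueEntries.isFunnel_descendants (h : HasUniqueEntries E)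
    (hcore : NontrivialBelowCore E) (hC : (C, C) ∈ SkelEdges E) (hcycle : IsSingleCycleOn C E)
    (hD : D ∈ CoreOn (SkelNodes E) (SkelEdges E)) (hx₀ : x₀ ∈ D) (hy₀ : y₀ ∈ C)
    (hedge : (x₀, y₀) ∈ E) : IsFunnel E (descendants E C) x₀ y₀ where
  closed _ _ := mem_descendants_of_edge
  entry := by
    intro x y hxy hx hy
    have hx₀C : x₀ ∉ C := fun hmem => core_notMem_descendants hC hD hx₀ (subset_descendants hmem)
    have hyC : y ∈ C := h.mem_of_edge_into_descendants hcore hC hxy hx hy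
    exact Prod.mk.inj <|
      h C hC.1 ⟨hxy, fun hmem => hx (subset_descendants hmem), hyC⟩ ⟨hedge, hx₀C, hy₀⟩
  upstream := h.backwardDeterministicOn_upstream_core hD hx₀
  inside := by
    rintro y hy x ⟨hx, hxy⟩ x' ⟨hx', hxy'⟩
    by_cases hyC : y ∈ C
    · have hmem : ∀ {z}, z ∈ descendants E C → (z, y) ∈ E → z ∈ C := fun hz hzy =>
        mem_of_mem_descendants_of_reachable hC.1 hz hyC (.of_edge hzy)
      exact hcycle.backwardDeterministicOn y hyC ⟨hmem hx hxy, hxy⟩ ⟨hmem hx' hxy', hxy'⟩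
    · exact h.pred_unique_of_mem_descendants hcore hC hy hyC hxy hxy'

end Descendants

theorem stmt10_general {V : Type*} {E : Set (V × V)} {β : V} (hβ : ∀ x, (x, β) ∉ E)
    (hentry : HasUniqueEntries E) (hcore : NontrivialBelowCore E) {C : Set V}
    (hC : (C, C) ∈ SkelEdges E) (hcycle : IsSingleCycleOn C E)
    {dep : V → ℕ} (hdep : ∀ v ∈ descendants E C, ∃ p, IsPath E (dep v) p β v) (j : ℕ) :
    descendants E C ∩ {v | ∃ w, IsWalk E j w β v}
        = {v ∈ descendants E C | dep v ≤ j ∧ C.ncard ∣ j - dep v} ∧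
    ∀ v ∈ descendants E C, ∀ w w' : ℕ → V,
      IsWalk E j w β v → IsWalk E j w' β v → ∀ t ≤ j, w t = w' t := by
  obtain ⟨D, hD, -, -, x₀, hx₀, y₀, hy₀, hedge⟩ := hcore C hC
  have hfunnel := hentry.isFunnel_descendants hcore hC hcycle hD hx₀ hy₀ hedge
  have hβC := source_notMem_descendants hβ hC
  refine ⟨?_, fun v hv w w' => hfunnel.walk_unique hβ hβC hv⟩
  ext v
  refine and_congr_right fun hv => ?_
  obtain ⟨p, hp⟩ := hdep v hv
  exact (hfunnel.exists_walk_iff hβ hβC hv hp).trans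
    (and_congr_right' (hcycle.exists_closed_walk_iff hC.1 hy₀))

/-- Lemma 3 of the paper: in a reduced graph, for every nontrivial
strong component `C` (a directed cycle `c` of length `l`) and every `j ≥ 1`,
`V_p⁺(j) = {α_i ∈ V_p⁺ : dep(α_i) ≤ j, ℓ_p ∣ j − dep(α_i)}`, and every node of
`V_p⁺(j)` is reached from `β` by exactly one walk of length `j`. The function `dep`
records the length of the unique path from `β` to each node. -/
theorem stmt10 {n : ℕ} (hn : 1 ≤ n) (E : Set (Node n × Node n))
    (hred : ReducedGraph n E)
    (C : Set (Node n)) (hC : C ∈ SkelNodes E) (hCnontriv : (C, C) ∈ SkelEdges E)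
    (l : ℕ) (c : ℕ → Node n) (u0 : Node n) (hu0 : u0 ∈ C)
    (hcyc : IsCycle E l c u0) (hcycset : {x | ∃ t < l, c t = x} = C)
    (dep : Node n → ℕ)
    (hdep : ∀ v : Node n, ∃ p : ℕ → Node n, IsPath E (dep v) p (none : Node n) v)
    (j : ℕ) (hj : 1 ≤ j) :
    VpPlus E C ∩ VSet E j
        = {v ∈ VpPlus E C | dep v ≤ j ∧ l ∣ (j - dep v)} ∧
    ∀ v ∈ VpPlus E C ∩ VSet E j, ∀ w w' : ℕ → Node n,
      IsWalk E j w (none : Node n) v → IsWalk E j w' (none : Node n) v →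
        ∀ t ≤ j, w t = w' t := by
  obtain ⟨⟨hβ, -⟩, htree, -, hunique, hloop⟩ := hred
  obtain rfl : C.ncard = l := ncard_eq_of_enumeration hcyc.2.2 hcycset
  have hgeneral := stmt10_general (fun x hx => hβ (x, none) hx rfl)
    (htree.hasUniqueEntries hunique) (fun D hD => (hloop D hD).1) hCnontriv
    (hloop C hCnontriv).2 (fun v _ => hdep v) j
  exact ⟨hgeneral.1, fun v hv => hgeneral.2 v hv.1⟩
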